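/- (Equivalence of the fractional upper-bound program and its pruned linear reformulation) Suppose R_Q ∩ R_W ≠ ∅ and the feasible set F = { q: R → ℝ_{≥0} : Σ_{r ∈ R_{v_B.v_A}} q_r = p_{v_B.v_A} for all (v_A, v_B), and Σ_{r ∈ R_W} q_r > 0 } is nonempty. Then sup over q ∈ F of the ratio (Σ_{r ∈ R_Q ∩ R_W} q_r)/(Σ_{r ∈ R_W} q_r) equals the optimal value of the pruned LP: max{ Σ_{h ∈ H} d_h^U q_h : Σ_{h ∈ H: h(v_A)=v_B} q_h = α·p_{v_B.v_A} for all (v_A, v_B), Σ_{h ∈ H: R_h ⊆ R_W} q_h = 1, α ≥ 0, q ≥ 0 }, where d_h^U = 1{R_h ∩ (R_Q ∩ R_W) ≠ ∅}. -/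

import Mathlib

open Classical

/-- A partitioned causal graph on binary variables `V_0, …, V_{n-1}`, listed in
topologically sorted order.  Indices `< a` form the index set `A` (context
variables, which have no parents and topologically precede the rest), indices
`≥ a` form the index set `B`.  `parents j` is the set of indices of `pa(V_j)`. -/
structure CausalGraph where
  n : ℕ
  a : ℕ
  a_le : a ≤ n
  parents : Fin n → Finset (Fin n)
  sorted : ∀ j i : Fin n, i ∈ parents j → i < j
  noParentsA : ∀ j : Fin n, j.val < a → parents j = ∅

namespace CausalGraph

variable (G : CausalGraph)

/-- Indices of the `A` (context) variables. -/
abbrev AIdx := {i : Fin G.n // i.val < G.a}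

/-- Indices of the `B` variables. -/
abbrev BIdx := {i : Fin G.n // G.a ≤ i.val}

/-- Assignments of binary values to the `A` variables (`{0,1}^{|A|}`). -/
abbrev AAssign := G.AIdx → Bool

/-- Assignments of binary values to the `B` variables (`{0,1}^{|B|}`). -/
abbrev BAssign := G.BIdx → Bool

/-- A family of candidate response functions, one for each node, each reading a
full assignment of all variables. -/
abbrev Resp := Fin G.n → ((Fin G.n → Bool) → Bool)

/-- A response family is admissible when each component depends only on the
values of the parents of the corresponding node.  This encodes membership in
`R = ∏_{j∈B} F_j`, where `F_j` is the set of ALL functions from values of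
`pa(V_j)` to `{0,1}`. -/
def IsResponse (r : G.Resp) : Prop :=
  ∀ j : Fin G.n, ∀ v w : Fin G.n → Bool, (∀ i ∈ G.parents j, v i = w i) → r j v = r j w

/-- The response-function set `R`. -/
def R : Set G.Resp := {r | G.IsResponse r}

/-- One step of evaluation: `A` variables read the context, `B` variables apply
their response functions to the current assignment. -/
def evalStep (r : G.Resp) (vA : G.AAssign) (v : Fin G.n → Bool) : Fin G.n → Bool :=
  fun j => if h : j.val < G.a then vA ⟨j, h⟩ else r j v

/-- Evaluation of all variables from the context `vA` and the response family
`r`, in topological order (realized by `n`-fold iteration of `evalStep`, which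
is exact since each parent index precedes its child's index). -/
def eval (r : G.Resp) (vA : G.AAssign) : Fin G.n → Bool :=
  (G.evalStep r vA)^[G.n] (fun _ => false)

/-- `F_B(v_A, r)`: the values of the `B` variables determined by `v_A` and `r`. -/
def FB (r : G.Resp) (vA : G.AAssign) : G.BAssign := fun j => G.eval r vA j.1

/-- A hyperarc `h : {0,1}^{|A|} → {0,1}^{|B|}`. -/
abbrev Hyperarc := G.AAssign → G.BAssign

/-- `R_h`: the admissible responses consistent with hyperarc `h` on every input. -/
def Rh (h : G.Hyperarc) : Set G.Resp :=
  {r ∈ G.R | ∀ vA : G.AAssign, G.FB r vA = h vA}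

/-- A hyperarc is valid when `R_h ≠ ∅`. -/
def Valid (h : G.Hyperarc) : Prop := (G.Rh h).Nonempty

/-- The set `H` of valid hyperarcs. -/
def H : Set G.Hyperarc := {h | G.Valid h}

/-- `R_{v_B.v_A}`: responses mapping the context `v_A` to the values `v_B` of `V_B`. -/
def RvBvA (vA : G.AAssign) (vB : G.BAssign) : Set G.Resp :=
  {r ∈ G.R | G.FB r vA = vB}

/-- Restriction of a full assignment to the `A` variables. -/
def restrictA (v : Fin G.n → Bool) : G.AAssign := fun i => v i.1

/-- Restriction of a full assignment to the `B` variables. -/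
def restrictB (v : Fin G.n → Bool) : G.BAssign := fun j => v j.1

/-- The full assignment determined by a context `vA` and a hyperarc `h`. -/
def extendA (h : G.Hyperarc) (vA : G.AAssign) : Fin G.n → Bool :=
  fun i => if hi : i.val < G.a then vA ⟨i, hi⟩ else h vA ⟨i, not_lt.mp hi⟩

/-- One step of evaluation under the intervention `do(V_I = q_I)`: the
mechanisms of the intervened variables are ignored. -/
def evalDoStep (I : Finset (Fin G.n)) (qI : Fin G.n → Bool) (r : G.Resp)
    (qA : G.AAssign) (v : Fin G.n → Bool) : Fin G.n → Bool :=
  fun j => if h : j.val < G.a then qA ⟨j, h⟩ else if j ∈ I then qI j else r j v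

/-- Evaluation of all variables under the intervention `do(V_I = q_I)`,
in context `V_A = q_A`, using the response family `r`. -/
def evalDo (I : Finset (Fin G.n)) (qI : Fin G.n → Bool) (r : G.Resp)
    (qA : G.AAssign) : Fin G.n → Bool :=
  (G.evalDoStep I qI r qA)^[G.n] (fun _ => false)

/-- A causal query `P(V_O(V_I = q_I) = q_O | V_A = q_A)`: disjoint sets
`O, I ⊆ B` together with the values `q_A`, `q_I`, `q_O`. -/
structure Query (G : CausalGraph) where
  O : Finset (Fin G.n)
  I : Finset (Fin G.n)
  O_sub : ∀ j ∈ O, G.a ≤ j.val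
  I_sub : ∀ j ∈ I, G.a ≤ j.val
  disjOI : Disjoint O I
  qA : G.AAssign
  qI : Fin G.n → Bool
  qO : Fin G.n → Bool

/-- `R_Q`: the admissible responses consistent with the query, i.e. those with
`F_O((q_A, q_I), r) = q_O`. -/
def RQ (Q : G.Query) : Set G.Resp :=
  {r ∈ G.R | ∀ j ∈ Q.O, G.evalDo Q.I Q.qI r Q.qA j = Q.qO j}

/-- Edges of the mutilated graph `G^{do(V_I = q_I)}` (all edges into `V_I` deleted). -/
def doEdge (I : Finset (Fin G.n)) (i j : Fin G.n) : Prop := j ∉ I ∧ i ∈ G.parents j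

/-- `C(Q)`: the critical variables for the query, i.e. those with a directed
path to some variable of `V_O` in the mutilated graph `G^{do(V_I = q_I)}`. -/
def critical (Q : G.Query) : Set (Fin G.n) :=
  {i | ∃ o ∈ Q.O, Relation.ReflTransGen (G.doEdge Q.I) i o}

/-- An observation `{V_W = q_W}` with `W ⊆ B`, in context `V_A = q_A`. -/
structure Obs (G : CausalGraph) where
  W : Finset (Fin G.n)
  W_sub : ∀ j ∈ W, G.a ≤ j.val
  qA : G.AAssign
  qW : Fin G.n → Bool

/-- `R_W`: the admissible responses consistent with the observation, i.e. those
with `F_W(q_A, r) = q_W`. -/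
def RW (Ob : G.Obs) : Set G.Resp :=
  {r ∈ G.R | ∀ j ∈ Ob.W, G.eval r Ob.qA j = Ob.qW j}

/-- Edges of the causal graph `G` itself. -/
def edge (i j : Fin G.n) : Prop := i ∈ G.parents j

/-- `C(W)`: the critical variables for the observation: the `A`-variables with
a directed path in `G` to some variable of `V_W`. -/
def criticalW (Ob : G.Obs) : Set (Fin G.n) :=
  {i | i.val < G.a ∧ ∃ w ∈ Ob.W, Relation.ReflTransGen G.edge i w}

end CausalGraph

open CausalGraph

/-- The sum `Σ_{x ∈ s} f x` of `f` over a subset `s` of a finite type. -/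
noncomputable def setSum {α : Type*} [Fintype α] (s : Set α) (f : α → ℝ) : ℝ :=
  ∑ x : α, if x ∈ s then f x else 0

section SetSum

variable {α β : Type*} [Fintype α] [Fintype β]

theorem setSum_nonneg {s : Set α} {f : α → ℝ} (hf : ∀ x, 0 ≤ f x) : 0 ≤ setSum s f :=
  Finset.sum_nonneg fun x _ => by split_ifs <;> simp [hf x]

theorem setSum_mono_set {s t : Set α} {f : α → ℝ} (hf : ∀ x, 0 ≤ f x) (hst : s ⊆ t) :
    setSum s f ≤ setSum t f := by
  refine Finset.sum_le_sum fun x _ => ?_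
  by_cases hs : x ∈ s
  · simp [hs, hst hs]
  · by_cases ht : x ∈ t <;> simp [hs, ht, hf x]

theorem setSum_const_mul (s : Set α) (c : ℝ) (f : α → ℝ) :
    setSum s (fun x => c * f x) = c * setSum s f := by
  simp only [setSum, Finset.mul_sum, mul_ite, mul_zero]

/-- Summing the pushforward of `q` restricted to `T` along `f`. -/
theorem setSum_pushforward (f : α → β) (T : Set α) (s : Set β) (q : α → ℝ) :
    setSum s (fun b => setSum {a ∈ T | f a = b} q) = setSum {a ∈ T | f a ∈ s} q := by
  unfold setSum
  trans ∑ b, ∑ a, if f a = b then (if a ∈ T ∧ b ∈ s then q a else 0) else 0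
  · refine Finset.sum_congr rfl fun b _ => ?_
    by_cases hb : b ∈ s
    · simp only [hb, if_true, and_true, Set.mem_ofPred_eq]
      refine Finset.sum_congr rfl fun a _ => ?_
      by_cases h : f a = b <;> simp [h]
    · simp [hb]
  · rw [Finset.sum_comm]
    refine Finset.sum_congr rfl fun a _ => ?_
    by_cases h : a ∈ T ∧ f a ∈ s <;> simp [h]

theorem setSum_fiberwise (f : α → β) (s : Set α) (q : α → ℝ) :
    ∑ b, setSum {a ∈ s | f a = b} q = setSum s q := by
  simpa [setSum] using setSum_pushforward f s Set.univ q

end SetSum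

namespace CausalGraph

variable (G : CausalGraph)

theorem mem_Rh_iff {h : G.Hyperarc} {r : G.Resp} : r ∈ G.Rh h ↔ r ∈ G.R ∧ G.FB r = h := by
  simp [Rh, funext_iff]

theorem mem_RW_congr {Ob : G.Obs} {r s : G.Resp} (hr : r ∈ G.R) (hs : s ∈ G.R)
    (h : G.FB r = G.FB s) : r ∈ G.RW Ob ↔ s ∈ G.RW Ob := by
  have key : ∀ j ∈ Ob.W, G.eval r Ob.qA j = G.eval s Ob.qA j := fun j hj =>
    congrFun (congrFun h Ob.qA) ⟨j, Ob.W_sub j hj⟩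
  constructor
  · exact fun hw => ⟨hs, fun j hj => (key j hj).symm.trans (hw.2 j hj)⟩
  · exact fun hw => ⟨hr, fun j hj => (key j hj).trans (hw.2 j hj)⟩

theorem Rh_subset_RW_iff {Ob : G.Obs} {h : G.Hyperarc} {r : G.Resp} (hr : r ∈ G.Rh h) :
    G.Rh h ⊆ G.RW Ob ↔ r ∈ G.RW Ob := by
  refine ⟨fun hs => hs hr, fun hw s hs => ?_⟩
  rw [mem_Rh_iff] at hr hs
  exact (G.mem_RW_congr hr.1 hs.1 (hr.2.trans hs.2.symm)).1 hw

/-- Every valid hyperarc has a representative response that lies in `S` whenever possible. -/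
theorem exists_representative (S : Set G.Resp) :
    ∃ rep : G.Hyperarc → G.Resp, ∀ h ∈ G.H,
      rep h ∈ G.Rh h ∧ (rep h ∈ S ↔ (G.Rh h ∩ S).Nonempty) := by
  have key : ∀ h : G.Hyperarc, ∃ r : G.Resp, h ∈ G.H →
      r ∈ G.Rh h ∧ (r ∈ S ↔ (G.Rh h ∩ S).Nonempty) := by
    intro h
    by_cases hS : (G.Rh h ∩ S).Nonempty
    · exact ⟨hS.some, fun _ => ⟨hS.some_mem.1, iff_of_true hS.some_mem.2 hS⟩⟩
    · by_cases hh : h ∈ G.H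
      · obtain ⟨r, hr⟩ := id hh
        exact ⟨r, fun _ => ⟨hr, iff_of_false (fun hrS => hS ⟨r, hr, hrS⟩) hS⟩⟩
      · exact ⟨fun _ _ => false, fun h' => absurd h' hh⟩
  choose rep hrep using key
  exact ⟨rep, hrep⟩

end CausalGraph

/-- Equivalence of the fractional upper-bound program and its
pruned linear reformulation: if `R_Q ∩ R_W ≠ ∅` and the feasible set `F` is
nonempty, then the supremum over `q ∈ F` of
`(Σ_{r∈R_Q∩R_W} q_r)/(Σ_{r∈R_W} q_r)` equals the optimal value of the pruned LP
with objective coefficients `d_h^U = 1{R_h ∩ (R_Q ∩ R_W) ≠ ∅}`. -/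
theorem fractional_upper_equiv (G : CausalGraph) (Q : G.Query) (Ob : G.Obs)
    (hqA : Ob.qA = Q.qA)
    (hQW : (G.RQ Q ∩ G.RW Ob).Nonempty)
    (p : G.AAssign → G.BAssign → ℝ)
    (hp : ∀ (vA : G.AAssign) (vB : G.BAssign), 0 ≤ p vA vB)
    (hp1 : ∀ vA : G.AAssign, ∑ vB : G.BAssign, p vA vB = 1)
    (hfeas : ∃ q : G.Resp → ℝ, (∀ r, 0 ≤ q r) ∧
      (∀ (vA : G.AAssign) (vB : G.BAssign), setSum (G.RvBvA vA vB) q = p vA vB) ∧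
      0 < setSum (G.RW Ob) q) :
    sSup {y : ℝ | ∃ q : G.Resp → ℝ, (∀ r, 0 ≤ q r) ∧
        (∀ (vA : G.AAssign) (vB : G.BAssign), setSum (G.RvBvA vA vB) q = p vA vB) ∧
        0 < setSum (G.RW Ob) q ∧
        y = setSum (G.RQ Q ∩ G.RW Ob) q / setSum (G.RW Ob) q} =
    sSup {y : ℝ | ∃ (qh : G.Hyperarc → ℝ) (α : ℝ), 0 ≤ α ∧ (∀ h, 0 ≤ qh h) ∧
        (∀ (vA : G.AAssign) (vB : G.BAssign),
          setSum {h ∈ G.H | h vA = vB} qh = α * p vA vB) ∧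
        setSum {h ∈ G.H | G.Rh h ⊆ G.RW Ob} qh = 1 ∧
        y = setSum {h ∈ G.H | (G.Rh h ∩ (G.RQ Q ∩ G.RW Ob)).Nonempty} qh} := by
  set S₁ := {y : ℝ | ∃ q : G.Resp → ℝ, (∀ r, 0 ≤ q r) ∧
        (∀ (vA : G.AAssign) (vB : G.BAssign), setSum (G.RvBvA vA vB) q = p vA vB) ∧
        0 < setSum (G.RW Ob) q ∧
        y = setSum (G.RQ Q ∩ G.RW Ob) q / setSum (G.RW Ob) q}
  set S₂ := {y : ℝ | ∃ (qh : G.Hyperarc → ℝ) (α : ℝ), 0 ≤ α ∧ (∀ h, 0 ≤ qh h) ∧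
        (∀ (vA : G.AAssign) (vB : G.BAssign),
          setSum {h ∈ G.H | h vA = vB} qh = α * p vA vB) ∧
        setSum {h ∈ G.H | G.Rh h ⊆ G.RW Ob} qh = 1 ∧
        y = setSum {h ∈ G.H | (G.Rh h ∩ (G.RQ Q ∩ G.RW Ob)).Nonempty} qh}
  have hbdd : BddAbove S₁ := by
    refine ⟨1, ?_⟩
    rintro y ⟨q, hq, -, hpos, rfl⟩
    exact div_le_one_of_le₀ (setSum_mono_set hq Set.inter_subset_right) hpos.le
  have hne : S₁.Nonempty := by
    obtain ⟨q, hq, hc, hpos⟩ := hfeas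
    exact ⟨_, q, hq, hc, hpos, rfl⟩
  have hsub : S₂ ⊆ S₁ := by
    rintro y ⟨qh, α, hα, hqh, hc, hW, rfl⟩
    have hαpos : 0 < α := by
      refine lt_of_le_of_ne hα fun h0 => ?_
      have hle : setSum {h ∈ G.H | G.Rh h ⊆ G.RW Ob} qh ≤ setSum G.H qh :=
        setSum_mono_set hqh fun h hh => hh.1
      have hz : setSum G.H qh = 0 := by
        rw [← setSum_fiberwise (fun h : G.Hyperarc => h Q.qA)]
        exact Finset.sum_eq_zero fun vB _ => by rw [hc, ← h0, zero_mul]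
      linarith
    obtain ⟨rep, hrep⟩ := G.exists_representative (G.RQ Q ∩ G.RW Ob)
    have hsum : ∀ s : Set G.Resp,
        setSum s (fun r => α⁻¹ * setSum {h ∈ G.H | rep h = r} qh) =
          α⁻¹ * setSum {h ∈ G.H | rep h ∈ s} qh := fun s => by
      rw [setSum_const_mul, setSum_pushforward]
    have hRW : setSum {h ∈ G.H | rep h ∈ G.RW Ob} qh = 1 := by
      rw [← hW]
      congr 1
      ext h
      exact and_congr_right fun hh => (G.Rh_subset_RW_iff (hrep h hh).1).symm
    refine ⟨fun r => α⁻¹ * setSum {h ∈ G.H | rep h = r} qh,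
      fun r => mul_nonneg (inv_nonneg.2 hα) (setSum_nonneg hqh), fun vA vB => ?_, ?_, ?_⟩
    · have hset : {h ∈ G.H | rep h ∈ G.RvBvA vA vB} = {h ∈ G.H | h vA = vB} := by
        ext h
        refine and_congr_right fun hh => ?_
        obtain ⟨hR, hF⟩ := (hrep h hh).1
        simp only [RvBvA, Set.mem_ofPred_eq, hR, true_and, hF]
      rw [hsum, hset, hc, inv_mul_cancel_left₀ hαpos.ne']
    · rw [hsum, hRW, mul_one]
      exact inv_pos.2 hαpos
    · have hset : {h ∈ G.H | rep h ∈ G.RQ Q ∩ G.RW Ob} =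
          {h ∈ G.H | (G.Rh h ∩ (G.RQ Q ∩ G.RW Ob)).Nonempty} := by
        ext h
        exact and_congr_right fun hh => (hrep h hh).2
      rw [hsum, hsum, hRW, hset, mul_one, mul_div_cancel_left₀ _ (inv_pos.2 hαpos).ne']
  have hdom : ∀ y ∈ S₁, ∃ z ∈ S₂, y ≤ z := by
    rintro y ⟨q, hq, hc, hpos, rfl⟩
    set D := setSum (G.RW Ob) q with hD
    have hsum : ∀ s : Set G.Hyperarc,
        setSum s (fun h => D⁻¹ * setSum {r ∈ G.R | G.FB r = h} q) =
          D⁻¹ * setSum {r ∈ G.R | G.FB r ∈ s} q := fun s => by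
      rw [setSum_const_mul, setSum_pushforward]
    have hself : ∀ r ∈ G.R, r ∈ G.Rh (G.FB r) := fun r hr => (G.mem_Rh_iff).2 ⟨hr, rfl⟩
    refine ⟨_, ⟨fun h => D⁻¹ * setSum {r ∈ G.R | G.FB r = h} q, D⁻¹, inv_nonneg.2 hpos.le,
      fun h => mul_nonneg (inv_nonneg.2 hpos.le) (setSum_nonneg hq), fun vA vB => ?_, ?_, rfl⟩, ?_⟩
    · have hset : {r ∈ G.R | G.FB r ∈ {h ∈ G.H | h vA = vB}} = G.RvBvA vA vB := by
        ext r
        exact and_congr_right fun hr => and_iff_right ⟨r, hself r hr⟩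
      rw [hsum, hset, hc]
    · have hset : {r ∈ G.R | G.FB r ∈ {h ∈ G.H | G.Rh h ⊆ G.RW Ob}} = G.RW Ob := by
        ext r
        refine ⟨fun hr => hr.2.2 (hself r hr.1), fun hr => ⟨hr.1, ⟨r, hself r hr.1⟩, ?_⟩⟩
        exact (G.Rh_subset_RW_iff (hself r hr.1)).2 hr
      rw [hsum, hset, ← hD, inv_mul_cancel₀ hpos.ne']
    · rw [hsum, div_eq_inv_mul]
      refine mul_le_mul_of_nonneg_left (setSum_mono_set hq fun r hr => ?_) (inv_nonneg.2 hpos.le)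
      exact ⟨hr.2.1, ⟨r, hself r hr.2.1⟩, r, hself r hr.2.1, hr⟩
  have hne₂ : S₂.Nonempty := by
    obtain ⟨y, hy⟩ := hne
    obtain ⟨z, hz, -⟩ := hdom y hy
    exact ⟨z, hz⟩
  refine le_antisymm (csSup_le hne fun y hy => ?_) (csSup_le_csSup hbdd hne₂ hsub)
  obtain ⟨z, hz, hyz⟩ := hdom y hy
  exact hyz.trans (le_csSup (hbdd.mono hsub) hz)
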